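/- Let (W^G, C^G, F^G) be an ℓℓ-extension of a model structure (W,C,F) on a bicomplete category M. If (W,C,F) is left proper and the cofibrant objects of (W,C,F) coincide with the G-cofibrant objects (the cofibrant objects of (W^G,C^G,F^G)), then (W^G, C^G, F^G) is left proper. -/

import Mathlib

/-! A map `f : A ⟶ X` in `WG` is pushed out along `i : A ⟶ B` in `CG` as follows. Take a cofibrant
replacement `QA ⟶ QX` of `f` in `(W, C, F)`; by hypothesis `QA` and `QX` are also `G`-cofibrant,
while `QA ⟶ A` and `QX ⟶ X` lie in `W`. Factor `QA ⟶ B` in the `G`-structure as `QA ⟶ B'` in `CG`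
followed by `B' ⟶ B` in `WG`.

* The pushout of `QA ⟶ QX` along `QA ⟶ B'` is in `WG`, being the pushout of a weak equivalence
  between cofibrant objects along a cofibration (`IsModelStructure.weq_pushout_of_cofibrant`).
* As `CG ⊆ C`, left properness of `(W, C, F)` shows that the pushouts of `QA ⟶ A` and of `QX ⟶ X`
  along the corresponding maps in `CG` are in `W`. Hence for `P' = A ⨿_{QA} B'` the pushout
  `P' ⟶ R` of `f` along `A ⟶ P'` is in `WG`, and so is `P' ⟶ B`.
* `P' ⟶ B` is a map in `WG` under `A` between objects cofibrant under `A`. Ken Brown's lemma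
  for the cobase change functor along `f` (`IsModelStructure.weq_cobaseChange`)
  shows that `R ⟶ P` is in `WG`. By two-out-of-three, `B ⟶ P` is in `WG`.
-/

open CategoryTheory CategoryTheory.Limits

universe v u v' u'

namespace LLExt

variable {M : Type u} [Category.{v} M]

/-- A class of morphisms has the two-out-of-three property. -/
def TwoOutOfThree (W : MorphismProperty M) : Prop :=
  (∀ ⦃X Y Z : M⦄ (f : X ⟶ Y) (g : Y ⟶ Z), W f → W g → W (f ≫ g)) ∧
  (∀ ⦃X Y Z : M⦄ (f : X ⟶ Y) (g : Y ⟶ Z), W f → W (f ≫ g) → W g) ∧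
  (∀ ⦃X Y Z : M⦄ (f : X ⟶ Y) (g : Y ⟶ Z), W g → W (f ≫ g) → W f)

/-- A class of morphisms is closed under retracts: if `f` is a retract of `g`
(in the arrow category) and `K g`, then `K f`. -/
def ClosedUnderRetracts (K : MorphismProperty M) : Prop :=
  ∀ ⦃A B A' B' : M⦄ (f : A ⟶ B) (g : A' ⟶ B') (i : A ⟶ A') (r : A' ⟶ A)
    (i' : B ⟶ B') (r' : B' ⟶ B),
    i ≫ r = 𝟙 A → i' ≫ r' = 𝟙 B → f ≫ i' = i ≫ g → g ≫ r' = r ≫ f → K g → K f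

/-- A class of morphisms is closed under composition. -/
def ClosedUnderComposition (K : MorphismProperty M) : Prop :=
  ∀ ⦃X Y Z : M⦄ (f : X ⟶ Y) (g : Y ⟶ Z), K f → K g → K (f ≫ g)

/-- A class of morphisms is closed under pushout (cobase change). -/
def ClosedUnderPushouts (K : MorphismProperty M) : Prop :=
  ∀ ⦃Z X Y P : M⦄ (f : Z ⟶ X) (g : Z ⟶ Y) (inl : X ⟶ P) (inr : Y ⟶ P),
    IsPushout f g inl inr → K f → K inr

/-- A class of morphisms is closed under pullback (base change). -/
def ClosedUnderPullbacks (K : MorphismProperty M) : Prop :=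
  ∀ ⦃P X Y Z : M⦄ (fst : P ⟶ X) (snd : P ⟶ Y) (f : X ⟶ Z) (g : Y ⟶ Z),
    IsPullback fst snd f g → K f → K snd

/-- Left properness: the pushout of a map in `W` along a map in `C` is in `W`. -/
def LeftProper (W C : MorphismProperty M) : Prop :=
  ∀ ⦃A X B P : M⦄ (f : A ⟶ X) (i : A ⟶ B) (inl : X ⟶ P) (inr : B ⟶ P),
    IsPushout f i inl inr → W f → C i → W inr

/-- Right properness: the pullback of a map in `W` along a map in `F` is in `W`. -/
def RightProper (W F : MorphismProperty M) : Prop :=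
  ∀ ⦃P X Y Z : M⦄ (fst : P ⟶ X) (snd : P ⟶ Y) (f : X ⟶ Z) (g : Y ⟶ Z),
    IsPullback fst snd f g → W f → F g → W snd

/-- A (Quillen) model structure on a category, given by classes `W` (weak
equivalences), `C` (cofibrations) and `F` (fibrations). -/
structure IsModelStructure (W C F : MorphismProperty M) : Prop where
  weq_twoOutOfThree : TwoOutOfThree W
  weq_retracts : ClosedUnderRetracts W
  cof_retracts : ClosedUnderRetracts C
  fib_retracts : ClosedUnderRetracts F
  lift_trivCof_fib : ∀ ⦃A B X Y : M⦄ (i : A ⟶ B) (p : X ⟶ Y),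
    C i → W i → F p → HasLiftingProperty i p
  lift_cof_trivFib : ∀ ⦃A B X Y : M⦄ (i : A ⟶ B) (p : X ⟶ Y),
    C i → F p → W p → HasLiftingProperty i p
  fact_cof_trivFib : ∀ ⦃X Y : M⦄ (f : X ⟶ Y),
    ∃ (Z : M) (i : X ⟶ Z) (p : Z ⟶ Y), C i ∧ F p ∧ W p ∧ i ≫ p = f
  fact_trivCof_fib : ∀ ⦃X Y : M⦄ (f : X ⟶ Y),
    ∃ (Z : M) (i : X ⟶ Z) (p : Z ⟶ Y), C i ∧ W i ∧ F p ∧ i ≫ p = f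

section ModelStructure

variable {W C F : MorphismProperty M}

/-- The retract argument: maps lifting against all trivial fibrations are cofibrations. -/
lemma IsModelStructure.cof_of_llp (h : IsModelStructure W C F) {A B : M} (f : A ⟶ B)
    (hf : (F ⊓ W).llp f) : C f := by
  obtain ⟨Z, i, p, hi, hp, hpW, fac⟩ := h.fact_cof_trivFib f
  have := hf p ⟨hp, hpW⟩
  have sq : CommSq i f p (𝟙 B) := ⟨by simp [fac]⟩
  exact h.cof_retracts f i (𝟙 A) (𝟙 A) sq.lift p (by simp) (by simp) (by simp) (by simp [fac]) hi

lemma IsModelStructure.cof_iff (h : IsModelStructure W C F) {A B : M} (f : A ⟶ B) :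
    C f ↔ (F ⊓ W).llp f :=
  ⟨fun hf _ _ p hp => h.lift_cof_trivFib f p hf hp.1 hp.2, h.cof_of_llp f⟩

lemma IsModelStructure.trivCof_iff (h : IsModelStructure W C F) {A B : M} (f : A ⟶ B) :
    (C f ∧ W f) ↔ F.llp f := by
  refine ⟨fun hf _ _ p hp => h.lift_trivCof_fib f p hf.1 hf.2 hp, fun hf => ?_⟩
  obtain ⟨Z, i, p, hi, hiW, hp, fac⟩ := h.fact_trivCof_fib f
  have := hf p hp
  have sq : CommSq i f p (𝟙 B) := ⟨by simp [fac]⟩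
  exact ⟨h.cof_retracts f i (𝟙 A) (𝟙 A) sq.lift p (by simp) (by simp) (by simp)
      (by simp [fac]) hi,
    h.weq_retracts f i (𝟙 A) (𝟙 A) sq.lift p (by simp) (by simp) (by simp) (by simp [fac]) hiW⟩

lemma IsModelStructure.cof_comp (h : IsModelStructure W C F) {X Y Z : M} {f : X ⟶ Y} {g : Y ⟶ Z}
    (hf : C f) (hg : C g) : C (f ≫ g) := by
  rw [h.cof_iff] at *
  exact MorphismProperty.comp_mem _ f g hf hg

lemma IsModelStructure.cof_pushout (h : IsModelStructure W C F) {Z X Y P : M} {f : Z ⟶ X}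
    {g : Z ⟶ Y} {inl : X ⟶ P} {inr : Y ⟶ P} (sq : IsPushout f g inl inr) (hf : C f) : C inr := by
  rw [h.cof_iff] at *
  exact MorphismProperty.of_isPushout sq.flip hf

lemma IsModelStructure.trivCof_pushout (h : IsModelStructure W C F) {Z X Y P : M} {f : Z ⟶ X}
    {g : Z ⟶ Y} {inl : X ⟶ P} {inr : Y ⟶ P} (sq : IsPushout f g inl inr) (hf : C f) (hW : W f) :
    C inr ∧ W inr := by
  have := (h.trivCof_iff f).1 ⟨hf, hW⟩
  rw [h.trivCof_iff]
  exact MorphismProperty.of_isPushout sq.flip this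

lemma IsModelStructure.weq_id (h : IsModelStructure W C F) (X : M) : W (𝟙 X) :=
  ((h.trivCof_iff (𝟙 X)).2 (fun _ _ _ _ => inferInstance)).2

/-- Ken Brown's factorization in the category of objects under `A`: a weak equivalence between
cofibrant objects is a trivial cofibration followed by a retraction of a trivial cofibration. -/
lemma IsModelStructure.brown_factorization [HasColimits M] (h : IsModelStructure W C F)
    {A Y Z : M} {a : A ⟶ Y} {b : A ⟶ Z} {g : Y ⟶ Z} (ha : C a) (hb : C b) (hg : W g)
    (w : a ≫ g = b) :
    ∃ (T : M) (j₁ : Y ⟶ T) (j₂ : Z ⟶ T) (p : T ⟶ Z), C j₁ ∧ W j₁ ∧ C j₂ ∧ W j₂ ∧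
      j₁ ≫ p = g ∧ j₂ ≫ p = 𝟙 Z ∧ a ≫ j₁ = b ≫ j₂ := by
  have sq := IsPushout.of_hasPushout a b
  obtain ⟨T, k, p, hk, -, hp, fac⟩ :=
    h.fact_cof_trivFib (sq.desc g (𝟙 Z) (by simp [w]))
  have e₁ : (pushout.inl a b ≫ k) ≫ p = g := by simp [fac]
  have e₂ : (pushout.inr a b ≫ k) ≫ p = 𝟙 Z := by simp [fac]
  refine ⟨T, pushout.inl a b ≫ k, pushout.inr a b ≫ k, p,
    h.cof_comp (h.cof_pushout sq.flip hb) hk, ?_, h.cof_comp (h.cof_pushout sq ha) hk, ?_,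
    e₁, e₂, ?_⟩
  · exact h.weq_twoOutOfThree.2.2 _ p hp (by rw [e₁]; exact hg)
  · exact h.weq_twoOutOfThree.2.2 _ p hp (by rw [e₂]; exact h.weq_id Z)
  · rw [pushout.condition_assoc]

/-- Ken Brown's lemma for cobase change along `f : A ⟶ X`: a weak equivalence under `A` between
objects that are cofibrant under `A` induces a weak equivalence on pushouts. -/
lemma IsModelStructure.weq_cobaseChange [HasColimits M] (h : IsModelStructure W C F)
    {A X Y Z PY PZ : M} {f : A ⟶ X} {a : A ⟶ Y} {b : A ⟶ Z} {g : Y ⟶ Z}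
    {inlY : X ⟶ PY} {inrY : Y ⟶ PY} {inlZ : X ⟶ PZ} {inrZ : Z ⟶ PZ}
    (sqY : IsPushout f a inlY inrY) (sqZ : IsPushout f b inlZ inrZ)
    (ha : C a) (hb : C b) (hg : W g) (w : a ≫ g = b)
    (k : PY ⟶ PZ) (hkl : inlY ≫ k = inlZ) (hkr : inrY ≫ k = g ≫ inrZ) : W k := by
  obtain ⟨T, j₁, j₂, p, hj₁, hj₁W, hj₂, hj₂W, e₁, e₂, e₃⟩ := h.brown_factorization ha hb hg w
  have sqT := IsPushout.of_hasPushout f (a ≫ j₁)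
  set inlT := pushout.inl f (a ≫ j₁)
  set inrT := pushout.inr f (a ≫ j₁)
  let k₁ : PY ⟶ pushout f (a ≫ j₁) := sqY.desc inlT (j₁ ≫ inrT) (by simpa using sqT.w)
  let k₂ : PZ ⟶ pushout f (a ≫ j₁) :=
    sqZ.desc inlT (j₂ ≫ inrT) (by rw [← Category.assoc, ← e₃]; exact sqT.w)
  let q : pushout f (a ≫ j₁) ⟶ PZ :=
    sqT.desc inlZ (p ≫ inrZ) (by rw [Category.assoc, reassoc_of% e₁, reassoc_of% w, sqZ.w])
  have sq₁ : IsPushout j₁ inrY inrT k₁ :=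
    (IsPushout.of_left (by simpa [k₁] using sqT.flip) (by simp [k₁]) sqY.flip)
  have sq₂ : IsPushout j₂ inrZ inrT k₂ :=
    (IsPushout.of_left (by simpa [k₂, ← e₃] using sqT.flip) (by simp [k₂]) sqZ.flip)
  have h₁ : W k₁ := (h.trivCof_pushout sq₁ hj₁ hj₁W).2
  have h₂ : W k₂ := (h.trivCof_pushout sq₂ hj₂ hj₂W).2
  have hk₂q : k₂ ≫ q = 𝟙 PZ := by
    apply sqZ.hom_ext <;> simp [k₂, q, reassoc_of% e₂]
  have hq : W q := h.weq_twoOutOfThree.2.1 k₂ q h₂ (by rw [hk₂q]; exact h.weq_id PZ)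
  have hk : k₁ ≫ q = k := by
    apply sqY.hom_ext <;> simp [k₁, q, hkl, hkr, reassoc_of% e₁]
  rw [← hk]
  exact h.weq_twoOutOfThree.1 _ _ h₁ hq

/-- The pushout along a cofibration of a retraction `f` of a trivial cofibration `s : X ⟶ A` is a
weak equivalence. The object `E = B ⨿_X A` is cofibrant under `A` and its cobase change along `f`
is `B`, so `B ⟶ P` is the cobase change along `f` of the weak equivalence `E ⟶ B`. -/
lemma IsModelStructure.weq_pushout_of_section [HasColimits M] (h : IsModelStructure W C F)
    {A X B P : M} {f : A ⟶ X} {i : A ⟶ B} {inl : X ⟶ P} {inr : B ⟶ P}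
    (sq : IsPushout f i inl inr) (hi : C i) {s : X ⟶ A} (hs : C s) (hsW : W s)
    (hsf : s ≫ f = 𝟙 X) : W inr := by
  have sqE := IsPushout.of_hasPushout s (s ≫ i)
  set u : A ⟶ _ := pushout.inl s (s ≫ i)
  set v : B ⟶ _ := pushout.inr s (s ≫ i)
  let r : pushout s (s ≫ i) ⟶ B := sqE.desc i (𝟙 B) (by simp)
  let t : pushout s (s ≫ i) ⟶ B := sqE.desc (f ≫ s ≫ i) (𝟙 B) (by simp [reassoc_of% hsf])
  have hv : W v := (h.trivCof_pushout sqE hs hsW).2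
  have hr : W r := h.weq_twoOutOfThree.2.1 v r hv (by
    have : v ≫ r = 𝟙 B := by simp [r]
    rw [this]; exact h.weq_id B)
  have hu : C u := h.cof_pushout sqE.flip (h.cof_comp hs hi)
  -- Pasting with the pushout `E` gives a square with identity sides `X ⟶ X` and `B ⟶ B`.
  have sqB : IsPushout f u (s ≫ i) t := by
    have outer : IsPushout (s ≫ f) (s ≫ i) (s ≫ i) (v ≫ t) := by
      have : v ≫ t = 𝟙 B := by simp [t]
      rw [this, hsf]
      exact IsPushout.of_horiz_isIso ⟨by simp⟩
    exact IsPushout.of_left outer (by simp [t]) sqE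
  exact h.weq_cobaseChange sqB sq hu hi hr (by simp [r]) inr
    (by rw [Category.assoc, ← sq.w, reassoc_of% hsf])
    (by apply sqE.hom_ext <;> simp [t, r, ← sq.w, reassoc_of% hsf])

/-- Weak equivalences between cofibrant objects are preserved by pushout along cofibrations. -/
lemma IsModelStructure.weq_pushout_of_cofibrant [HasColimits M] (h : IsModelStructure W C F)
    {A X B P : M} {f : A ⟶ X} {i : A ⟶ B} {inl : X ⟶ P} {inr : B ⟶ P}
    (sq : IsPushout f i inl inr) (hi : C i) (hf : W f)
    (hA : C (initial.to A)) (hX : C (initial.to X)) : W inr := by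
  obtain ⟨T, j₁, j₂, p, hj₁, hj₁W, hj₂, hj₂W, e₁, e₂, -⟩ :=
    h.brown_factorization hA hX hf (by simp)
  have sqS := IsPushout.of_hasPushout j₁ i
  set l := pushout.inl j₁ i
  set r := pushout.inr j₁ i
  let t : pushout j₁ i ⟶ P := sqS.desc (p ≫ inl) inr (by rw [reassoc_of% e₁, sq.w])
  have sqP : IsPushout p l inl t := by
    refine IsPushout.of_left (h₁₁ := j₁) (v₁₁ := i) (h₂₁ := r) ?_ (by simp [t]) sqS
    simpa [e₁, t] using sq
  have ht : W t := h.weq_pushout_of_section sqP (h.cof_pushout sqS.flip hi) hj₂ hj₂W e₂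
  have hr : W r := (h.trivCof_pushout sqS hj₁ hj₁W).2
  have : r ≫ t = inr := by simp [t]
  rw [← this]
  exact h.weq_twoOutOfThree.1 _ _ hr ht

end ModelStructure

/-- Proposition 2.5(1): if `M` is left proper and the cofibrant objects coincide
with the `G`-cofibrant objects, then the ℓℓ-extension is left proper. -/
theorem llExtension_leftProper_of_leftProper
    [HasLimits M] [HasColimits M]
    (W C F WG CG FG : MorphismProperty M)
    (hMS : IsModelStructure W C F)
    (hG : IsModelStructure WG CG FG)
    (hWsub : ∀ ⦃X Y : M⦄ (f : X ⟶ Y), W f → WG f)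
    (hCsub : ∀ ⦃X Y : M⦄ (f : X ⟶ Y), CG f → C f)
    (hFsub : ∀ ⦃X Y : M⦄ (f : X ⟶ Y), FG f → F f)
    (hlp : LeftProper W C)
    (hcof : ∀ X : M, C (initial.to X) ↔ CG (initial.to X)) :
    LeftProper WG CG := by
  intro A X B P f i inl inr sq hf hi
  obtain ⟨QA, cA, qA, hcA, -, hqA, -⟩ := hMS.fact_cof_trivFib (initial.to A)
  obtain ⟨QX, qf, qX, hqf, -, hqX, facX⟩ := hMS.fact_cof_trivFib (qA ≫ f)
  have hcA' : C (initial.to QA) := by rwa [Subsingleton.elim (initial.to QA) cA]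
  have hcX' : C (initial.to QX) := by
    rw [Subsingleton.elim (initial.to QX) (initial.to QA ≫ qf)]
    exact hMS.cof_comp hcA' hqf
  have hqfG : WG qf := hG.weq_twoOutOfThree.2.2 qf qX (hWsub _ hqX) (by
    rw [facX]; exact hG.weq_twoOutOfThree.1 _ _ (hWsub _ hqA) hf)
  obtain ⟨B', i', b, hi', -, hb, facB⟩ := hG.fact_cof_trivFib (qA ≫ i)
  -- `D = QX ⨿_{QA} B'`, `P' = A ⨿_{QA} B'` and `R = X ⨿_{QX} D`.
  obtain ⟨D, dl, dr, sqD⟩ : ∃ (D : M) (dl : QX ⟶ D) (dr : B' ⟶ D), IsPushout qf i' dl dr :=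
    ⟨_, _, _, IsPushout.of_hasPushout _ _⟩
  obtain ⟨P', l, r, sqP'⟩ : ∃ (P' : M) (l : A ⟶ P') (r : B' ⟶ P'), IsPushout qA i' l r :=
    ⟨_, _, _, IsPushout.of_hasPushout _ _⟩
  obtain ⟨R, rl, rr, sqR⟩ : ∃ (R : M) (rl : X ⟶ R) (rr : D ⟶ R), IsPushout qX dl rl rr :=
    ⟨_, _, _, IsPushout.of_hasPushout _ _⟩
  have hdr : WG dr :=
    hG.weq_pushout_of_cofibrant sqD hi' hqfG ((hcof _).1 hcA') ((hcof _).1 hcX')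
  have hrr : W rr := hlp _ _ _ _ sqR hqX (hCsub _ (hG.cof_pushout sqD.flip hi'))
  have hr : W r := hlp _ _ _ _ sqP' hqA (hCsub _ hi')
  have hl : CG l := hG.cof_pushout sqP'.flip hi'
  have outer : IsPushout (qA ≫ f) i' rl (dr ≫ rr) := by
    rw [← facX]
    exact sqD.flip.paste_vert sqR.flip |>.flip
  let t : P' ⟶ R := sqP'.desc (f ≫ rl) (dr ≫ rr) (by simpa using outer.w)
  have sqt : IsPushout f l rl t :=
    IsPushout.of_left (by simpa [t] using outer) (by simp [t]) sqP'
  have ht : WG t := hG.weq_twoOutOfThree.2.1 r t (hWsub _ hr) (by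
    have : r ≫ t = dr ≫ rr := by simp [t]
    rw [this]
    exact hG.weq_twoOutOfThree.1 _ _ hdr (hWsub _ hrr))
  let g : P' ⟶ B := sqP'.desc i b facB.symm
  have hg : WG g := hG.weq_twoOutOfThree.2.1 r g (hWsub _ hr) (by
    have : r ≫ g = b := by simp [g]
    rwa [this])
  have hlg : l ≫ g = i := by simp [g]
  let k : R ⟶ P := sqt.desc inl (g ≫ inr) (by rw [reassoc_of% hlg, sq.w])
  have htk : t ≫ k = g ≫ inr := by simp [k]
  have hk : WG k := hG.weq_cobaseChange sqt sq hl hi hg hlg k (by simp [k]) htk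
  exact hG.weq_twoOutOfThree.2.1 g inr hg (by
    rw [← htk]; exact hG.weq_twoOutOfThree.1 _ _ ht hk)

end LLExt
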